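/- Let t be a positive integer and let G be a t-obstruction, i.e., a finite simple graph whose vertex set is the disjoint union of four independent sets A = {a_1,…,a_t}, B = {b_1,…,b_t}, C = {c_1,…,c_t}, D = {d_1,…,d_t}, each of size t, such that the edges of G with both endpoints in A ∪ B are exactly a_1b_1, …, a_tb_t, the edges of G with both endpoints in C ∪ D are exactly c_1d_1, …, c_td_t, every vertex of B is adjacent to every vertex of C, and the edges between A and C, between A and D, and between B and D are arbitrary. Then the induced matching treewidth of G is at least t. -/

import Mathlib

open SimpleGraph

/-- A tree decomposition of a (finite, simple) graph `G`: a finite tree `T` together with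
bags `bag x ⊆ V` such that every vertex is in a bag, every edge is inside some bag, and for
every vertex the set of nodes whose bag contains it induces a connected subtree of `T`. -/
structure TreeDecomp {V : Type} (G : SimpleGraph V) where
  ι : Type
  fintype_ι : Fintype ι
  T : SimpleGraph ι
  isTree : T.IsTree
  bag : ι → Set V
  mem_bag : ∀ v : V, ∃ x : ι, v ∈ bag x
  edge_bag : ∀ ⦃u v : V⦄, G.Adj u v → ∃ x : ι, u ∈ bag x ∧ v ∈ bag x
  bag_conn : ∀ v : V, (T.induce {x : ι | v ∈ bag x}).Connected

/-- `a`, `b` enumerate the endpoints of an induced matching of size `n` in `G`: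
the edges `a i — b i` are present, and endpoints of distinct edges are pairwise distinct
and non-adjacent. -/
def IsIndMatching {V : Type} (G : SimpleGraph V) {n : ℕ} (a b : Fin n → V) : Prop :=
  (∀ i, G.Adj (a i) (b i)) ∧
  ∀ i j : Fin n, i ≠ j →
    a i ≠ a j ∧ a i ≠ b j ∧ b i ≠ a j ∧ b i ≠ b j ∧
    ¬ G.Adj (a i) (a j) ∧ ¬ G.Adj (a i) (b j) ∧ ¬ G.Adj (b i) (a j) ∧ ¬ G.Adj (b i) (b j)

/-- `μ(T,β) ≤ μ`: every induced matching touching a bag of the decomposition has size at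
most `μ`. -/
def TreeDecomp.MuLE {V : Type} {G : SimpleGraph V} (td : TreeDecomp G) (μ : ℕ) : Prop :=
  ∀ (x : td.ι) (n : ℕ) (a b : Fin n → V),
    IsIndMatching G a b → (∀ i, a i ∈ td.bag x ∨ b i ∈ td.bag x) → n ≤ μ

/-- `α(T,β) ≤ k`: every independent set contained in a single bag has size at most `k`. -/
def TreeDecomp.AlphaLE {V : Type} {G : SimpleGraph V} (td : TreeDecomp G) (k : ℕ) : Prop :=
  ∀ (x : td.ι) (I : Finset V), ↑I ⊆ td.bag x →
    ((I : Set V)).Pairwise (fun u v => ¬ G.Adj u v) → I.card ≤ k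

/-- The induced matching treewidth `tree-μ(G)`: the least `n` admitting a tree decomposition
with `μ(T,β) ≤ n`. -/
noncomputable def treeMu {V : Type} (G : SimpleGraph V) : ℕ :=
  sInf {n | ∃ td : TreeDecomp G, td.MuLE n}

/-- The tree-independence number `tree-α(G)`: the least `n` admitting a tree decomposition
with `α(T,β) ≤ n`. -/
noncomputable def treeAlpha {V : Type} (G : SimpleGraph V) : ℕ :=
  sInf {n | ∃ td : TreeDecomp G, td.AlphaLE n}

theorem aux_parent {ι : Type} {T : SimpleGraph ι} (hT : T.IsTree) (r u v w : ι)
    (hv : T.Adj v u) (hw : T.Adj w u) (dv : T.dist r u = T.dist r v + 1)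
    (dw : T.dist r u = T.dist r w + 1) : v = w := by
  obtain ⟨p, hp⟩ := hT.connected.exists_walk_length_eq_dist r v
  obtain ⟨q, hq⟩ := hT.connected.exists_walk_length_eq_dist r w
  have h1 : (p.concat hv).IsPath :=
    Walk.isPath_of_length_eq_dist _ (by rw [Walk.length_concat]; omega)
  have h2 : (q.concat hw).IsPath :=
    Walk.isPath_of_length_eq_dist _ (by rw [Walk.length_concat]; omega)
  have h3 := (hT.existsUnique_path r u).unique h1 h2
  have h4 := congrArg Walk.penultimate h3
  simpa using h4

theorem aux_step {ι : Type} {T : SimpleGraph ι} (hT : T.IsTree) (r x u v : ι)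
    (huv : T.Adj u v) (hu : T.dist r u = T.dist r x + T.dist x u) (hne : u ≠ x) :
    T.dist r v = T.dist r x + T.dist x v := by
  have t1 := hT.connected.dist_triangle (u := r) (v := x) (w := v)
  have t2 := hT.connected.dist_triangle (u := x) (v := u) (w := v)
  have t3 : T.dist u v = 1 := dist_eq_one_iff_adj.2 huv
  rcases hT.dist_eq_dist_add_one_of_adj r huv with h | h
  · obtain ⟨p, hp⟩ := hT.connected.exists_walk_length_eq_dist x u
    have hnil : ¬ p.Nil := fun hn => hne hn.eq.symm
    have hadj := p.adj_penultimate hnil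
    have hd : T.dist x p.penultimate ≤ p.dropLast.length := dist_le _
    have hl : p.dropLast.length + 1 = p.length := Walk.length_dropLast_add_one hnil
    have t4 := hT.connected.dist_triangle (u := r) (v := x) (w := p.penultimate)
    have hv : v = p.penultimate := by
      apply aux_parent hT r u _ _ huv.symm hadj h
      rcases hT.dist_eq_dist_add_one_of_adj r hadj with h' | h' <;> omega
    have e := congrArg (T.dist x) hv
    omega
  · omega

theorem aux_conn {ι : Type} {T : SimpleGraph ι} {S : Set ι} (hS : (T.induce S).Connected)
    (P : ι → Prop) (hP : ∀ u v, u ∈ S → v ∈ S → T.Adj u v → P u → P v) (u v : ι)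
    (hu : u ∈ S) (hv : v ∈ S) (h : P u) : P v := by
  obtain ⟨p⟩ := hS.preconnected ⟨u, hu⟩ ⟨v, hv⟩
  have : ∀ (y z : S) (_ : (T.induce S).Walk y z), P y → P z := by
    intro y z p
    induction p with
    | nil => exact id
    | cons h p ih => exact fun hy => ih (hP _ _ (Subtype.coe_prop _) (Subtype.coe_prop _) h hy)
  exact this _ _ p h

theorem aux_cross {ι : Type} {T : SimpleGraph ι} (hT : T.IsTree) (r x y : ι) {S R : Set ι}
    (hS : (T.induce S).Connected) (hR : (T.induce R).Connected) (hx : x ∈ S)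
    (hmin : ∀ z ∈ S, T.dist r x ≤ T.dist r z) (hy : y ∈ R) (hyx : T.dist r y ≤ T.dist r x)
    (hSR : ∃ z, z ∈ S ∧ z ∈ R) : x ∈ R := by
  by_contra hxR
  obtain ⟨z, hzS, hzR⟩ := hSR
  have hz : T.dist r z = T.dist r x + T.dist x z := by
    refine aux_conn hS (fun z => T.dist r z = T.dist r x + T.dist x z) ?_ x z hx hzS (by simp)
    intro u v _ hv huv hu
    by_cases h : u = x
    · subst h
      have := hmin v hv
      have h1 : T.dist u v = 1 := dist_eq_one_iff_adj.2 huv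
      rcases hT.dist_eq_dist_add_one_of_adj r huv with h' | h' <;> omega
    · exact aux_step hT r x u v huv hu h
  have hy' : T.dist r y = T.dist r x + T.dist x y := by
    refine aux_conn hR (fun z => T.dist r z = T.dist r x + T.dist x z) ?_ z y hzR hy hz
    intro u v hu' hv huv hu
    exact aux_step hT r x u v huv hu (fun h => hxR (h ▸ hu'))
  have h0 : T.dist x y = 0 := by omega
  rw [hT.connected.dist_eq_zero_iff] at h0
  exact hxR (h0 ▸ hy)

theorem aux_min {ι : Type} {T : SimpleGraph ι} (r : ι) {S : Set ι}
    (hS : (T.induce S).Connected) : ∃ x ∈ S, ∀ z ∈ S, T.dist r x ≤ T.dist r z := by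
  obtain ⟨s⟩ := hS.nonempty
  obtain ⟨x, hx, h⟩ := (measure (T.dist r)).wf.has_min S ⟨s, s.2⟩
  exact ⟨x, hx, fun z hz => not_lt.1 (h z hz)⟩

theorem aux_main {ι : Type} {T : SimpleGraph ι} (hT : T.IsTree) {t : ℕ} (ht : 0 < t)
    (S R : Fin t → Set ι) (hS : ∀ i, (T.induce (S i)).Connected)
    (hR : ∀ i, (T.induce (R i)).Connected) (hSR : ∀ i j, ∃ z, z ∈ S i ∧ z ∈ R j) :
    ∃ x, (∀ i, x ∈ S i) ∨ (∀ i, x ∈ R i) := by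
  have : Nonempty (Fin t) := ⟨⟨0, ht⟩⟩
  obtain ⟨r⟩ := hT.connected.nonempty
  choose x hx hxm using fun i => aux_min r (hS i)
  choose y hy hym using fun i => aux_min r (hR i)
  obtain ⟨i, hi⟩ := Finite.exists_max (fun i => T.dist r (x i))
  obtain ⟨j, hj⟩ := Finite.exists_max (fun i => T.dist r (y i))
  rcases le_total (T.dist r (y j)) (T.dist r (x i)) with h | h
  · exact ⟨x i, Or.inr fun k => aux_cross hT r (x i) (y k) (hS i) (hR k) (hx i) (hxm i) (hy k)
      ((hj k).trans h) (hSR i k)⟩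
  · exact ⟨y j, Or.inl fun k => aux_cross hT r (y j) (x k) (hR j) (hS k) (hy j) (hym j) (hx k)
      ((hi k).trans h) (by obtain ⟨z, h1, h2⟩ := hSR k j; exact ⟨z, h2, h1⟩)⟩

theorem aux_exists {V : Type} [Fintype V] (G : SimpleGraph V) :
    ∃ n, ∃ td : TreeDecomp G, td.MuLE n := by
  refine ⟨Fintype.card V, ⟨Unit, inferInstance, ⊥, IsTree.of_subsingleton, fun _ => Set.univ,
    by simp, by simp, fun v => ?_⟩, ?_⟩
  · have : Nonempty {x : Unit | v ∈ (Set.univ : Set V)} := ⟨⟨(), trivial⟩⟩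
    exact IsTree.of_subsingleton.connected
  · intro x n a b h _
    have : Function.Injective a := by
      intro i j hij
      by_contra hne
      exact (h.2 i j hne).1 hij
    simpa using Fintype.card_le_of_injective a this

/-- Every `t`-obstruction has induced matching treewidth at least `t`. Here a
`t`-obstruction is a graph whose vertex set is the disjoint union of four independent sets
`A = a '' univ`, `B = b '' univ`, `C = c '' univ`, `D = d '' univ`, each of size `t`, such
that the edges inside `A ∪ B` are exactly the matching `a i — b i`, the edges inside
`C ∪ D` are exactly the matching `c i — d i`, all edges between `B` and `C` are present,
and the edges between `A` and `C`, `A` and `D`, `B` and `D` are arbitrary. -/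
theorem stmt16 (t : ℕ) (ht : 0 < t) (V : Type) [Fintype V] (G : SimpleGraph V)
    (a b c d : Fin t → V)
    (hbij : Function.Bijective
      (Sum.elim a (Sum.elim b (Sum.elim c d)) :
        Fin t ⊕ (Fin t ⊕ (Fin t ⊕ Fin t)) → V))
    (hA : ∀ i j : Fin t, ¬ G.Adj (a i) (a j))
    (hB : ∀ i j : Fin t, ¬ G.Adj (b i) (b j))
    (hC : ∀ i j : Fin t, ¬ G.Adj (c i) (c j))
    (hD : ∀ i j : Fin t, ¬ G.Adj (d i) (d j))
    (hAB : ∀ i j : Fin t, G.Adj (a i) (b j) ↔ i = j)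
    (hCD : ∀ i j : Fin t, G.Adj (c i) (d j) ↔ i = j)
    (hBC : ∀ i j : Fin t, G.Adj (b i) (c j)) :
    t ≤ treeMu G := by
  refine le_csInf (aux_exists G) ?_
  rintro n ⟨td, hn⟩
  have inj := hbij.1
  have hab : ∀ i j, a i ≠ b j := fun i j h => by
    have := @inj (Sum.inl i) (Sum.inr (Sum.inl j)) h
    simp at this
  have hcd : ∀ i j, c i ≠ d j := fun i j h => by
    have := @inj (Sum.inr (Sum.inr (Sum.inl i))) (Sum.inr (Sum.inr (Sum.inr j))) h
    simp at this
  have haa : ∀ i j, i ≠ j → a i ≠ a j := fun i j hne h => by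
    have := @inj (Sum.inl i) (Sum.inl j) h
    simp at this; exact hne this
  have hbb : ∀ i j, i ≠ j → b i ≠ b j := fun i j hne h => by
    have := @inj (Sum.inr (Sum.inl i)) (Sum.inr (Sum.inl j)) h
    simp at this; exact hne this
  have hcc : ∀ i j, i ≠ j → c i ≠ c j := fun i j hne h => by
    have := @inj (Sum.inr (Sum.inr (Sum.inl i))) (Sum.inr (Sum.inr (Sum.inl j))) h
    simp at this; exact hne this
  have hdd : ∀ i j, i ≠ j → d i ≠ d j := fun i j hne h => by
    have := @inj (Sum.inr (Sum.inr (Sum.inr i))) (Sum.inr (Sum.inr (Sum.inr j))) h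
    simp at this; exact hne this
  have mab : IsIndMatching G a b := ⟨fun i => (hAB i i).2 rfl, fun i j hne =>
    ⟨haa i j hne, hab i j, (hab j i).symm, hbb i j hne, hA i j, fun h => hne ((hAB i j).1 h),
      fun h => hne ((hAB j i).1 h.symm).symm, hB i j⟩⟩
  have mcd : IsIndMatching G c d := ⟨fun i => (hCD i i).2 rfl, fun i j hne =>
    ⟨hcc i j hne, hcd i j, (hcd j i).symm, hdd i j hne, hC i j, fun h => hne ((hCD i j).1 h),
      fun h => hne ((hCD j i).1 h.symm).symm, hD i j⟩⟩
  have key : ∀ u v, G.Adj u v →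
      (td.T.induce ({x | u ∈ td.bag x} ∪ {x | v ∈ td.bag x})).Connected := fun u v h =>
    induce_union_connected (td.bag_conn u).preconnected (td.bag_conn v).preconnected
      (td.edge_bag h)
  obtain ⟨x, hx | hx⟩ := aux_main td.isTree ht _ _ (fun i => key _ _ (mab.1 i))
    (fun i => key _ _ (mcd.1 i)) (fun i j => by
      obtain ⟨z, h1, h2⟩ := td.edge_bag (hBC i j)
      exact ⟨z, Or.inr h1, Or.inl h2⟩)
  · exact hn x t a b mab hx
  · exact hn x t c d mcd hx
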